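/- arXiv:1607.04571 — 3 statements merged into one kernel-verified Lean document; each statement's English description precedes it below -/
import Mathlib

section
/- Let f₁, f₂ : ℝ → ℝ be real-analytic at 0 with f₁(0) = f₂(0) = 0 and f₁'(0) = f₂'(0) = 0, and suppose that on a punctured neighborhood of 0, f₁''(s) = (1 + f₁'(s)²)·(1 − f₁'(s)/s) and f₂''(s) = (f₂'(s)² − 1)·(1 + f₂'(s)/s). Then for every odd k, the k-th derivatives satisfy f₁^{(k)}(0) = f₂^{(k)}(0) = 0, and for every m ≥ 0, f₁^{(2m)}(0) = (−1)^m · f₂^{(2m)}(0). -/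
open Topology

/-!
Write `f'' = (ε + f' ^ 2) * (1 - ε * f' / s)`, so that the two profile equations are the cases
`ε = 1` and `ε = -1`. After multiplication by `s`, the Taylor series `P` of `f'` solves
`X P' = (ε + P²)(X - ε P)`, and the substitution `P ↦ a P(aX)` with `a⁴ = 1` turns a solution for
`ε` into one for `a² ε`. Since `n + ε² ≠ 0` for `n ≥ 1`, the recursion for the coefficients
determines `P` from `P(0) = 0`. Comparing coefficients for `a = -1` shows that `P` is odd, and for
`a = i` that the solutions for `ε` and `-ε` agree up to signs; this is `f₂(s) = f₁(is)` at the level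
of Taylor series.
-/

namespace TranslatingSoliton

section FormalPowerSeries

open PowerSeries

section CommSemiring

variable {R : Type*} [CommSemiring R]

theorem coeff_X_mul_derivative (f : R⟦X⟧) (n : ℕ) :
    coeff n (X * d⁄dX R f) = n * coeff n f := by
  cases n with
  | zero => simp
  | succ n => rw [coeff_succ_X_mul, coeff_derivative, mul_comm, Nat.cast_succ]

theorem X_mul_derivative_rescale (a : R) (f : R⟦X⟧) :
    X * d⁄dX R (rescale a f) = rescale a (X * d⁄dX R f) := by
  ext n
  simp only [coeff_X_mul_derivative, coeff_rescale]
  ring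

theorem derivative_map {S : Type*} [CommSemiring S] (φ : R →+* S) (f : R⟦X⟧) :
    d⁄dX S (map φ f) = map φ (d⁄dX R f) := by
  ext n
  simp [coeff_derivative]

end CommSemiring

variable {R S : Type*} [CommRing R] [CommRing S]

theorem eq_zero_of_X_mul_derivative_add_C_mul_eq [NoZeroDivisors R] {c : R} {D K : R⟦X⟧}
    (hc : ∀ n : ℕ, n ≠ 0 → (n : R) + c ≠ 0) (hD : constantCoeff D = 0)
    (hK : constantCoeff K = 0) (h : X * d⁄dX R D + C c * D = K * D) : D = 0 := by
  ext n
  induction n using Nat.strong_induction_on with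
  | _ n ih =>
    rcases eq_or_ne n 0 with rfl | hn
    · simpa using hD
    have hKD : coeff n (K * D) = 0 := by
      rw [coeff_mul]
      refine Finset.sum_eq_zero fun ⟨i, j⟩ hij => ?_
      have hij := Finset.HasAntidiagonal.mem_antidiagonal.mp hij
      rcases Nat.eq_zero_or_pos i with rfl | hi
      · rw [coeff_zero_eq_constantCoeff_apply, hK, zero_mul]
      · rw [ih j (by lia), map_zero, mul_zero]
    have hrec : ((n : R) + c) * coeff n D = 0 := by
      rw [← hKD, ← h, map_add, coeff_X_mul_derivative, coeff_C_mul, add_mul]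
    rw [map_zero]
    exact (mul_eq_zero.mp hrec).resolve_left (hc n hn)

/-- `P` is a formal solution, vanishing at `0`, of the equation satisfied by the slope `P = f'` of a
profile with `f'' = (ε + f' ^ 2) * (1 - ε * f' / s)`. The equation is multiplied by `s`, which
removes its singularity at `0`. -/
structure IsProfileSlope (ε : R) (P : R⟦X⟧) : Prop where
  constantCoeff_eq_zero : constantCoeff P = 0
  X_mul_derivative : X * d⁄dX R P = (C ε + P ^ 2) * (X - C ε * P)

namespace IsProfileSlope

variable {ε : R} {P Q : R⟦X⟧}

theorem map (φ : R →+* S) (hP : IsProfileSlope ε P) :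
    IsProfileSlope (φ ε) (PowerSeries.map φ P) where
  constantCoeff_eq_zero := by
    rw [← coeff_zero_eq_constantCoeff_apply, coeff_map, coeff_zero_eq_constantCoeff_apply,
      hP.constantCoeff_eq_zero, map_zero]
  X_mul_derivative := by
    simpa [derivative_map] using congrArg (PowerSeries.map φ) hP.X_mul_derivative

protected theorem unique [NoZeroDivisors R] (hε : ∀ n : ℕ, n ≠ 0 → (n : R) + ε ^ 2 ≠ 0)
    (hP : IsProfileSlope ε P) (hQ : IsProfileSlope ε Q) : P = Q := by
  have hP₀ := hP.constantCoeff_eq_zero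
  have hQ₀ := hQ.constantCoeff_eq_zero
  have hlin : X * d⁄dX R (P - Q) + C (ε ^ 2) * (P - Q) =
      (X * (P + Q) - C ε * (P ^ 2 + P * Q + Q ^ 2)) * (P - Q) := by
    rw [map_sub, mul_sub, hP.X_mul_derivative, hQ.X_mul_derivative, map_pow]
    ring
  exact sub_eq_zero.mp <|
    eq_zero_of_X_mul_derivative_add_C_mul_eq hε (by simp [hP₀, hQ₀]) (by simp [hP₀, hQ₀]) hlin

theorem C_mul_rescale {a : R} (ha : a ^ 4 = 1) (hP : IsProfileSlope ε P) :
    IsProfileSlope (a ^ 2 * ε) (C a * rescale a P) where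
  constantCoeff_eq_zero := by
    rw [map_mul, ← coeff_zero_eq_constantCoeff_apply (rescale a P), coeff_rescale,
      coeff_zero_eq_constantCoeff_apply, hP.constantCoeff_eq_zero, mul_zero, mul_zero]
  X_mul_derivative := by
    have hCa : (C a : R⟦X⟧) ^ 4 = 1 := by rw [← map_pow, ha, map_one]
    have hCε : rescale a (C ε) = C ε := by
      ext n
      rcases eq_or_ne n 0 with rfl | hn <;> simp [coeff_C, *]
    have hderiv : X * d⁄dX R (C a * rescale a P) =
        C a * ((C ε + rescale a P ^ 2) * (C a * X - C ε * rescale a P)) := by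
      rw [← smul_eq_C_mul, Derivation.map_smul, smul_eq_C_mul, mul_left_comm,
        X_mul_derivative_rescale, hP.X_mul_derivative]
      simp only [map_mul, map_add, map_sub, map_pow, rescale_X, hCε]
    rw [hderiv, map_mul, map_pow]
    generalize rescale a P = p
    linear_combination C a * C ε * p * (C ε + p ^ 2) * hCa

theorem coeff_eq_pow_mul_coeff [NoZeroDivisors R] (hε : ∀ n : ℕ, n ≠ 0 → (n : R) + ε ^ 2 ≠ 0)
    {a : R} (ha : a ^ 4 = 1) (hP : IsProfileSlope ε P) (hQ : IsProfileSlope (a ^ 2 * ε) Q) (n : ℕ) :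
    coeff n Q = a ^ (n + 1) * coeff n P := by
  have hε' : (a ^ 2 * ε) ^ 2 = ε ^ 2 := by linear_combination ε ^ 2 * ha
  rw [hQ.unique (by simpa only [hε'] using hε) (hP.C_mul_rescale ha), coeff_C_mul, coeff_rescale,
    pow_succ', mul_assoc]

theorem coeff_eq_zero_of_even [NoZeroDivisors R] [CharZero R]
    (hε : ∀ n : ℕ, n ≠ 0 → (n : R) + ε ^ 2 ≠ 0) (hP : IsProfileSlope ε P) {n : ℕ} (hn : Even n) :
    coeff n P = 0 := by
  have hneg := hP.coeff_eq_pow_mul_coeff (a := -1) hε (by norm_num) (by simpa using hP) n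
  rw [hn.add_one.neg_one_pow, neg_one_mul] at hneg
  exact self_eq_neg.mp hneg

theorem coeff_two_mul_add_one {F : Type*} [Field F] {ε : F} {P Q : F⟦X⟧}
    (hε : ∀ n : ℕ, n ≠ 0 → (n : F) + ε ^ 2 ≠ 0) (hP : IsProfileSlope ε P)
    (hQ : IsProfileSlope (-ε) Q) (m : ℕ) :
    coeff (2 * m + 1) Q = (-1) ^ (m + 1) * coeff (2 * m + 1) P := by
  let φ := algebraMap F (AlgebraicClosure F)
  obtain ⟨i, hi⟩ := IsAlgClosed.exists_pow_nat_eq (-1 : AlgebraicClosure F) two_pos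
  have hφε (n : ℕ) (hn : n ≠ 0) : (n : AlgebraicClosure F) + φ ε ^ 2 ≠ 0 := by
    simpa using (map_ne_zero φ).mpr (hε n hn)
  have hφQ : IsProfileSlope (i ^ 2 * φ ε) (PowerSeries.map φ Q) := by
    simpa [hi] using hQ.map φ
  have hcoeff := (hP.map φ).coeff_eq_pow_mul_coeff hφε (by linear_combination (i ^ 2 - 1) * hi) hφQ
    (2 * m + 1)
  rw [show 2 * m + 1 + 1 = 2 * (m + 1) by ring, pow_mul, hi] at hcoeff
  exact φ.injective (by simpa using hcoeff)

end IsProfileSlope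

end FormalPowerSeries

section TaylorSeries

open PowerSeries
open scoped ContDiff Nat

variable {𝕜 : Type*} [NontriviallyNormedField 𝕜] {f g : 𝕜 → 𝕜} {x : 𝕜}

/-- The formal Taylor series of `f` at `x`, in the variable `X` standing for the increment. -/
noncomputable def taylorSeries (f : 𝕜 → 𝕜) (x : 𝕜) : 𝕜⟦X⟧ :=
  PowerSeries.mk fun n => iteratedDeriv n f x / n !

theorem coeff_taylorSeries (f : 𝕜 → 𝕜) (x : 𝕜) (n : ℕ) :
    coeff n (taylorSeries f x) = iteratedDeriv n f x / n ! :=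
  coeff_mk _ _

theorem constantCoeff_taylorSeries (f : 𝕜 → 𝕜) (x : 𝕜) :
    constantCoeff (taylorSeries f x) = f x := by
  simp [← coeff_zero_eq_constantCoeff_apply, coeff_taylorSeries]

theorem taylorSeries_congr (h : f =ᶠ[𝓝 x] g) : taylorSeries f x = taylorSeries g x := by
  ext n
  rw [coeff_taylorSeries, coeff_taylorSeries, h.iteratedDeriv_eq n]

theorem taylorSeries_const (c x : 𝕜) : taylorSeries (fun _ => c) x = C c := by
  ext n
  rcases eq_or_ne n 0 with rfl | hn <;>
    simp [coeff_taylorSeries, iteratedDeriv_const, coeff_C, *]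

theorem taylorSeries_id (x : 𝕜) : taylorSeries id x = C x + X := by
  ext n
  rcases n with _ | _ | n <;> simp [coeff_taylorSeries, iteratedDeriv_id, coeff_X]

theorem taylorSeries_add (hf : ContDiffAt 𝕜 ∞ f x) (hg : ContDiffAt 𝕜 ∞ g x) :
    taylorSeries (f + g) x = taylorSeries f x + taylorSeries g x := by
  ext n
  simp only [map_add, coeff_taylorSeries]
  rw [iteratedDeriv_add (contDiffAt_infty.mp hf n) (contDiffAt_infty.mp hg n), add_div]

theorem taylorSeries_sub (hf : ContDiffAt 𝕜 ∞ f x) (hg : ContDiffAt 𝕜 ∞ g x) :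
    taylorSeries (f - g) x = taylorSeries f x - taylorSeries g x := by
  ext n
  simp only [map_sub, coeff_taylorSeries]
  rw [iteratedDeriv_sub (contDiffAt_infty.mp hf n) (contDiffAt_infty.mp hg n), sub_div]

variable [CharZero 𝕜]

theorem taylorSeries_mul (hf : ContDiffAt 𝕜 ∞ f x) (hg : ContDiffAt 𝕜 ∞ g x) :
    taylorSeries (f * g) x = taylorSeries f x * taylorSeries g x := by
  ext n
  rw [coeff_mul, Finset.Nat.sum_antidiagonal_eq_sum_range_succ_mk, coeff_taylorSeries,
    iteratedDeriv_mul (contDiffAt_infty.mp hf n) (contDiffAt_infty.mp hg n), Finset.sum_div]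
  refine Finset.sum_congr rfl fun i hi => ?_
  simp only [coeff_taylorSeries]
  rw [Nat.cast_choose 𝕜 (Finset.mem_range_succ_iff.mp hi)]
  have hn : (n ! : 𝕜) ≠ 0 := mod_cast n.factorial_ne_zero
  field_simp

theorem taylorSeries_deriv (f : 𝕜 → 𝕜) (x : 𝕜) :
    taylorSeries (deriv f) x = d⁄dX 𝕜 (taylorSeries f x) := by
  ext n
  have hn : (n : 𝕜) + 1 ≠ 0 := n.cast_add_one_ne_zero
  rw [coeff_derivative, coeff_taylorSeries, coeff_taylorSeries, iteratedDeriv_succ',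
    Nat.factorial_succ, Nat.cast_mul, Nat.cast_succ]
  field_simp

theorem iteratedDeriv_succ_eq_factorial_mul_coeff (f : 𝕜 → 𝕜) (x : 𝕜) (n : ℕ) :
    iteratedDeriv (n + 1) f x = n ! * coeff n (taylorSeries (deriv f) x) := by
  rw [coeff_taylorSeries, iteratedDeriv_succ',
    mul_div_cancel₀ _ (Nat.cast_ne_zero.mpr n.factorial_ne_zero)]

theorem isProfileSlope_taylorSeries_deriv {ε : 𝕜} (hf : ContDiffAt 𝕜 ∞ f 0) (hf₀ : deriv f 0 = 0)
    (hode : ∀ᶠ s in 𝓝[≠] (0 : 𝕜),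
      deriv (deriv f) s = (ε + deriv f s ^ 2) * (1 - ε * deriv f s / s)) :
    IsProfileSlope ε (taylorSeries (deriv f) 0) where
  constantCoeff_eq_zero := by rw [constantCoeff_taylorSeries, hf₀]
  X_mul_derivative := by
    have hcleared : id * deriv (deriv f) =ᶠ[𝓝 0]
        ((fun _ => ε) + deriv f * deriv f) * (id - (fun _ => ε) * deriv f) := by
      filter_upwards [eventually_nhdsWithin_iff.mp hode] with s hs
      rcases eq_or_ne s 0 with rfl | hs₀
      · simp [hf₀]
      · simp only [Pi.mul_apply, Pi.add_apply, Pi.sub_apply, id_eq, hs hs₀]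
        field_simp
    have hid : ContDiffAt 𝕜 ∞ id (0 : 𝕜) := contDiffAt_id
    have hε : ContDiffAt 𝕜 ∞ (fun _ => ε) (0 : 𝕜) := contDiffAt_const
    have hf' : ContDiffAt 𝕜 ∞ (deriv f) 0 := hf.derivWithin le_rfl
    have hf'' : ContDiffAt 𝕜 ∞ (deriv (deriv f)) 0 := hf'.derivWithin le_rfl
    have hsq : ContDiffAt 𝕜 ∞ (deriv f * deriv f) 0 := hf'.mul hf'
    have hεf' : ContDiffAt 𝕜 ∞ ((fun _ => ε) * deriv f) 0 := hε.mul hf'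
    have hsum : ContDiffAt 𝕜 ∞ ((fun _ => ε) + deriv f * deriv f) 0 := hε.add hsq
    have hdiff : ContDiffAt 𝕜 ∞ (id - (fun _ => ε) * deriv f) 0 := hid.sub hεf'
    calc X * d⁄dX 𝕜 (taylorSeries (deriv f) 0)
        = taylorSeries (id * deriv (deriv f)) 0 := by
          rw [taylorSeries_mul hid hf'', taylorSeries_id, taylorSeries_deriv (deriv f), map_zero,
            zero_add]
      _ = taylorSeries (((fun _ => ε) + deriv f * deriv f) * (id - (fun _ => ε) * deriv f)) 0 :=
          taylorSeries_congr hcleared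
      _ = (C ε + taylorSeries (deriv f) 0 ^ 2) * (X - C ε * taylorSeries (deriv f) 0) := by
          rw [taylorSeries_mul hsum hdiff, taylorSeries_add hε hsq, taylorSeries_sub hid hεf',
            taylorSeries_mul hf' hf', taylorSeries_mul hε hf', taylorSeries_const,
            taylorSeries_id, map_zero, zero_add, sq]

end TaylorSeries

end TranslatingSoliton

open TranslatingSoliton in
open scoped ContDiff in
theorem stmt_11_general {𝕜 : Type*} [NontriviallyNormedField 𝕜] [CharZero 𝕜] {ε : 𝕜}
    (hε : ∀ n : ℕ, n ≠ 0 → (n : 𝕜) + ε ^ 2 ≠ 0) {f₁ f₂ : 𝕜 → 𝕜}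
    (hf₁ : ContDiffAt 𝕜 ∞ f₁ 0) (hf₂ : ContDiffAt 𝕜 ∞ f₂ 0) (h0 : f₁ 0 = f₂ 0)
    (h₁0' : deriv f₁ 0 = 0) (h₂0' : deriv f₂ 0 = 0)
    (hODE₁ : ∀ᶠ s in 𝓝[≠] (0 : 𝕜),
      deriv (deriv f₁) s = (ε + deriv f₁ s ^ 2) * (1 - ε * deriv f₁ s / s))
    (hODE₂ : ∀ᶠ s in 𝓝[≠] (0 : 𝕜),
      deriv (deriv f₂) s = (deriv f₂ s ^ 2 - ε) * (1 + ε * deriv f₂ s / s)) :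
    (∀ k : ℕ, Odd k → iteratedDeriv k f₁ 0 = 0 ∧ iteratedDeriv k f₂ 0 = 0) ∧
    ∀ m : ℕ, iteratedDeriv (2 * m) f₁ 0 = (-1) ^ m * iteratedDeriv (2 * m) f₂ 0 := by
  have hP₁ := isProfileSlope_taylorSeries_deriv hf₁ h₁0' hODE₁
  have hP₂ : IsProfileSlope (-ε) (taylorSeries (deriv f₂) 0) :=
    isProfileSlope_taylorSeries_deriv hf₂ h₂0' (hODE₂.mono fun s hs => by rw [hs]; ring)
  have hε' : ∀ n : ℕ, n ≠ 0 → (n : 𝕜) + (-ε) ^ 2 ≠ 0 := by simpa only [neg_sq] using hε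
  refine ⟨?_, fun m => ?_⟩
  · rintro _ ⟨m, rfl⟩
    simp only [iteratedDeriv_succ_eq_factorial_mul_coeff,
      hP₁.coeff_eq_zero_of_even hε (even_two_mul m),
      hP₂.coeff_eq_zero_of_even hε' (even_two_mul m), mul_zero, and_self]
  · cases m with
    | zero => simpa using h0
    | succ m =>
      rw [show 2 * (m + 1) = 2 * m + 1 + 1 by ring, iteratedDeriv_succ_eq_factorial_mul_coeff,
        iteratedDeriv_succ_eq_factorial_mul_coeff,
        hP₂.coeff_two_mul_add_one hε' (by simpa using hP₁), mul_left_comm]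

/-- Relations between the derivatives at 0 of the two boost-invariant
translating-soliton profiles in Minkowski 3-space. -/
theorem stmt_11 (f₁ f₂ : ℝ → ℝ)
    (ha₁ : AnalyticAt ℝ f₁ 0) (ha₂ : AnalyticAt ℝ f₂ 0)
    (h₁0 : f₁ 0 = 0) (h₂0 : f₂ 0 = 0)
    (h₁0' : deriv f₁ 0 = 0) (h₂0' : deriv f₂ 0 = 0)
    (hODE₁ : ∀ᶠ s in 𝓝[≠] (0 : ℝ),
      deriv (deriv f₁) s = (1 + (deriv f₁ s) ^ 2) * (1 - deriv f₁ s / s))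
    (hODE₂ : ∀ᶠ s in 𝓝[≠] (0 : ℝ),
      deriv (deriv f₂) s = ((deriv f₂ s) ^ 2 - 1) * (1 + deriv f₂ s / s)) :
    (∀ k : ℕ, Odd k → iteratedDeriv k f₁ 0 = 0 ∧ iteratedDeriv k f₂ 0 = 0) ∧
    ∀ m : ℕ, iteratedDeriv (2 * m) f₁ 0 = (-1 : ℝ) ^ m * iteratedDeriv (2 * m) f₂ 0 := by
  exact stmt_11_general (ε := 1) (fun n _ => by positivity) ha₁.contDiffAt ha₂.contDiffAt
    (h₁0.trans h₂0.symm) h₁0' h₂0' (by simpa only [one_mul] using hODE₁)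
    (by simpa only [one_mul] using hODE₂)
end

section
/- Let ε, η ∈ {−1, 1} and let f : ℝ → ℝ be real-analytic at 0 with f'(0) = 0, satisfying s·f''(s) = (ε + f'(s)²)·(s − η·f'(s)) for every s in a neighborhood of 0. Then f is even near 0: there exists δ > 0 with f(−s) = f(s) for every s ∈ (−δ, δ). -/
open Topology

/-!
Write `g = f'`. The equation reads `s g' = F(s, g)` with `F(s, y) = (ε + y²)(s - η y)` odd, so
`s ↦ -g(-s)` is a second solution vanishing at `0`. The difference `w(s) = g(s) + g(-s)` then
satisfies `s w' = c w + o(w)` with `c = ∂F/∂y(0, 0) = -εη`. For an analytic `w ≢ 0` of order `n`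
one always has `s w' = n w + o(w)`, which forces `c = n`. Since `w` is even and vanishes at `0`,
`n` is even and positive, so `n ≥ 2`, whereas `-εη ≤ 1`. Hence `g` is odd and `f` is even.
-/

open Asymptotics Filter

section EulerOperator

variable {𝕜 E : Type*} [NontriviallyNormedField 𝕜] [NormedAddCommGroup E] [NormedSpace 𝕜 E]
  {w : 𝕜 → E} {z₀ : 𝕜}

theorem sub_smul_deriv_pow_smul {u : 𝕜 → E} {z : 𝕜} (n : ℕ) (hu : DifferentiableAt 𝕜 u z) :
    (z - z₀) • deriv (fun z ↦ (z - z₀) ^ n • u z) z =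
      (n : 𝕜) • (z - z₀) ^ n • u z + (z - z₀) ^ n • (z - z₀) • deriv u z := by
  have hpow : HasDerivAt (fun z ↦ (z - z₀) ^ n) (n * (z - z₀) ^ (n - 1)) z := by
    simpa using ((hasDerivAt_id z).sub_const z₀).fun_pow n
  rw [(hpow.fun_smul hu.hasDerivAt).deriv]
  rcases n with _ | n
  · simp
  · rw [Nat.add_sub_cancel]
    module

theorem sub_smul_deriv_isLittleO_of_ne_zero [CompleteSpace E] {u : 𝕜 → E}
    (hu : AnalyticAt 𝕜 u z₀) (hu₀ : u z₀ ≠ 0) : (fun z ↦ (z - z₀) • deriv u z) =o[𝓝 z₀] u := by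
  have hlim : Tendsto (fun z ↦ (z - z₀) • deriv u z) (𝓝 z₀) (𝓝 0) := by
    have hderiv : ContinuousAt (deriv u) z₀ := hu.deriv.continuousAt
    have hcont : ContinuousAt (fun z ↦ (z - z₀) • deriv u z) z₀ := by fun_prop
    simpa [ContinuousAt] using hcont
  exact ((isLittleO_const_iff hu₀).2 hlim).trans_isBigO
    ((isEquivalent_const_iff_tendsto hu₀).2 hu.continuousAt).isBigO_symm

theorem sub_smul_deriv_sub_analyticOrderNatAt_smul_isLittleO [CompleteSpace E]
    (hw : AnalyticAt 𝕜 w z₀) (hfin : analyticOrderAt w z₀ ≠ ⊤) :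
    (fun z ↦ (z - z₀) • deriv w z - (analyticOrderNatAt w z₀ : 𝕜) • w z) =o[𝓝 z₀] w := by
  obtain ⟨u, hu, hu₀, hwu⟩ := hw.analyticOrderAt_ne_top.1 hfin
  have hremainder : ∀ᶠ z in 𝓝 z₀,
      (z - z₀) ^ analyticOrderNatAt w z₀ • (z - z₀) • deriv u z =
        (z - z₀) • deriv w z - (analyticOrderNatAt w z₀ : 𝕜) • w z := by
    filter_upwards [hwu.eventuallyEq_nhds, hu.eventually_analyticAt] with z hwuz huz
    rw [hwuz.deriv_eq, hwuz.eq_of_nhds, sub_smul_deriv_pow_smul _ huz.differentiableAt,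
      add_sub_cancel_left]
  exact ((isBigO_refl _ _).smul_isLittleO (sub_smul_deriv_isLittleO_of_ne_zero hu hu₀)).congr'
    hremainder hwu.symm

theorem eq_analyticOrderNatAt_of_sub_smul_deriv_sub_smul_isLittleO [CompleteSpace E] {c : 𝕜}
    (hw : AnalyticAt 𝕜 w z₀) (hfin : analyticOrderAt w z₀ ≠ ⊤)
    (hc : (fun z ↦ (z - z₀) • deriv w z - c • w z) =o[𝓝 z₀] w) :
    c = analyticOrderNatAt w z₀ := by
  by_contra hne
  have hself : (fun z ↦ (c - analyticOrderNatAt w z₀) • w z) =o[𝓝 z₀] w :=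
    ((sub_smul_deriv_sub_analyticOrderNatAt_smul_isLittleO hw hfin).sub hc).congr_left
      fun z ↦ by module
  have hnonzero : ∃ᶠ z in 𝓝 z₀, w z ≠ 0 := fun h ↦
    hfin (analyticOrderAt_eq_top.2 (by simpa only [not_not] using h))
  exact isLittleO_irrefl hnonzero ((isLittleO_const_smul_left (sub_ne_zero.2 hne)).1 hself)

end EulerOperator

section Parity

variable {𝕜 E : Type*} [NontriviallyNormedField 𝕜] [CharZero 𝕜] [NormedAddCommGroup E]
  [NormedSpace 𝕜 E]

theorem even_of_iteratedDeriv_zero_ne_zero {w : 𝕜 → E} {n : ℕ} (hw : w.Even)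
    (hn : iteratedDeriv n w 0 ≠ 0) : Even n := by
  by_contra hodd
  have hneg : iteratedDeriv n w 0 = -iteratedDeriv n w 0 := by
    simpa [funext hw, (Nat.not_even_iff_odd.1 hodd).neg_one_pow] using iteratedDeriv_comp_neg n w 0
  have : IsAddTorsionFree E := .of_isTorsionFree 𝕜 E
  exact hn (self_eq_neg.1 hneg)

theorem even_analyticOrderNatAt_zero [CompleteSpace E] {w : 𝕜 → E} (hw : w.Even) :
    Even (analyticOrderNatAt w 0) := by
  by_cases han : AnalyticAt 𝕜 w 0
  · by_cases hfin : analyticOrderAt w 0 = ⊤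
    · simp [analyticOrderNatAt, hfin]
    · have horder := (Nat.cast_analyticOrderNatAt hfin).symm
      rw [analyticOrderAt_eq_nat_iff_iteratedDeriv_eq_zero han] at horder
      exact even_of_iteratedDeriv_zero_ne_zero hw horder.2
  · simp [analyticOrderNatAt_of_not_analyticAt han]

theorem eventually_even_of_eventually_odd_deriv [CompleteSpace E] {f : 𝕜 → E}
    (hf : AnalyticAt 𝕜 f 0) (hodd : ∀ᶠ s in 𝓝 0, deriv f (-s) = -deriv f s) :
    ∀ᶠ s in 𝓝 0, f (-s) = f s := by
  have hfneg : AnalyticAt 𝕜 (fun s ↦ f (-s)) 0 := hf.comp_of_eq analyticAt_id.neg neg_zero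
  have hderiv : ∀ᶠ s in 𝓝 0, deriv ((fun s ↦ f (-s)) - f) s = 0 := by
    filter_upwards [hodd, hf.eventually_analyticAt, hfneg.eventually_analyticAt] with s hs hfs hfns
    rw [deriv_sub hfns.differentiableAt hfs.differentiableAt, deriv_comp_neg, hs, neg_neg, sub_self]
  have hzero : ∀ᶠ s in 𝓝 0, ((fun s ↦ f (-s)) - f) s = 0 :=
    analyticOrderAt_eq_top.1 <|
      (analyticOrderAt_deriv_eq_top_iff_of_eq_zero (hfneg.sub hf) (by simp)).1 <|
        analyticOrderAt_eq_top.2 hderiv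
  exact hzero.mono fun s hs ↦ sub_eq_zero.1 hs

end Parity

section BriotBouquet

variable {𝕜 : Type*} [NontriviallyNormedField 𝕜]
  {F : 𝕜 × 𝕜 → 𝕜} {F' : 𝕜 × 𝕜 →L[𝕜] 𝕜} {g h : 𝕜 → 𝕜} {z₀ : 𝕜}

theorem isLittleO_sub_sub_mul_of_hasStrictFDerivAt
    (hF : HasStrictFDerivAt F F' (z₀, g z₀)) (hg : ContinuousAt g z₀) (hh : ContinuousAt h z₀)
    (h₀ : h z₀ = g z₀) :
    (fun z ↦ F (z, g z) - F (z, h z) - F' (0, 1) * (g z - h z)) =o[𝓝 z₀] (g - h) := by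
  have hlim : Tendsto (fun z ↦ ((z, g z), (z, h z))) (𝓝 z₀) (𝓝 ((z₀, g z₀), (z₀, g z₀))) := by
    have hpairs : ContinuousAt (fun z ↦ ((z, g z), (z, h z))) z₀ := by fun_prop
    simpa only [ContinuousAt, h₀] using hpairs
  have hF'_snd (y : 𝕜) : F' (0, y) = F' (0, 1) * y := by
    simpa [mul_comm] using F'.map_smul y (0, 1)
  have hincrement := hF.isLittleO.comp_tendsto hlim
  refine (hincrement.congr_left fun z ↦ ?_).trans_le fun z ↦ ?_
  · rw [Function.comp_apply, Prod.mk_sub_mk, sub_self, hF'_snd]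
  · simp [Prod.norm_def]

theorem partialDeriv_eq_analyticOrderNatAt_sub [CompleteSpace 𝕜]
    (hF : HasStrictFDerivAt F F' (z₀, g z₀)) (hg : AnalyticAt 𝕜 g z₀) (hh : AnalyticAt 𝕜 h z₀)
    (h₀ : h z₀ = g z₀)
    (hgODE : ∀ᶠ z in 𝓝 z₀, (z - z₀) * deriv g z = F (z, g z))
    (hhODE : ∀ᶠ z in 𝓝 z₀, (z - z₀) * deriv h z = F (z, h z))
    (hne : analyticOrderAt (g - h) z₀ ≠ ⊤) :
    F' (0, 1) = analyticOrderNatAt (g - h) z₀ := by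
  refine eq_analyticOrderNatAt_of_sub_smul_deriv_sub_smul_isLittleO (hg.sub hh) hne ?_
  have hincrement :=
    isLittleO_sub_sub_mul_of_hasStrictFDerivAt hF hg.continuousAt hh.continuousAt h₀
  refine hincrement.congr' ?_ .rfl
  filter_upwards [hgODE, hhODE, hg.eventually_analyticAt, hh.eventually_analyticAt]
    with z hgz hhz hgan hhan
  rw [deriv_sub hgan.differentiableAt hhan.differentiableAt, smul_eq_mul, smul_eq_mul,
    mul_sub (z - z₀), hgz, hhz, Pi.sub_apply]

theorem mul_deriv_neg_comp_neg_eq (hodd : F.Odd)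
    (hODE : ∀ᶠ s in 𝓝 0, s * deriv g s = F (s, g s)) :
    ∀ᶠ s in 𝓝 0, s * deriv (fun s ↦ -g (-s)) s = F (s, -g (-s)) := by
  have hneg : Tendsto (fun s : 𝕜 ↦ -s) (𝓝 0) (𝓝 0) := by
    simpa using (continuous_neg (G := 𝕜)).tendsto 0
  filter_upwards [hneg.eventually hODE] with s hs
  calc s * deriv (fun s ↦ -g (-s)) s = -(-s * deriv g (-s)) := by
        rw [deriv.fun_neg, deriv_comp_neg]; ring
    _ = F (-(-s, g (-s))) := by rw [hs, hodd]
    _ = F (s, -g (-s)) := by simp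

theorem eventually_odd_of_mul_deriv_eq [CompleteSpace 𝕜] [CharZero 𝕜] (hodd : F.Odd)
    (hF : HasStrictFDerivAt F F' 0)
    (hres : ∀ n : ℕ, 0 < n → Even n → F' (0, 1) ≠ n)
    (hg : AnalyticAt 𝕜 g 0) (hg₀ : g 0 = 0)
    (hODE : ∀ᶠ s in 𝓝 0, s * deriv g s = F (s, g s)) :
    ∀ᶠ s in 𝓝 0, g (-s) = -g s := by
  let h : 𝕜 → 𝕜 := fun s ↦ -g (-s)
  have hh : AnalyticAt 𝕜 h 0 := (hg.comp_of_eq analyticAt_id.neg neg_zero).neg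
  have heven : (g - h).Even := fun s ↦ by simp [h, add_comm]
  have hw₀ : (g - h) 0 = 0 := by simp [h, hg₀]
  suffices htop : analyticOrderAt (g - h) 0 = ⊤ by
    filter_upwards [analyticOrderAt_eq_top.1 htop] with s hs
    have hsum : g s + g (-s) = 0 := by simpa [h] using hs
    exact eq_neg_of_add_eq_zero_right hsum
  by_contra hfin
  have hpos : 0 < analyticOrderNatAt (g - h) 0 := by
    have hne : analyticOrderAt (g - h) 0 ≠ 0 := (hg.sub hh).analyticOrderAt_ne_zero.2 hw₀
    rw [← Nat.cast_analyticOrderNatAt hfin] at hne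
    exact Nat.pos_of_ne_zero (by exact_mod_cast hne)
  refine hres _ hpos (even_analyticOrderNatAt_zero heven) ?_
  refine partialDeriv_eq_analyticOrderNatAt_sub (by rwa [hg₀]) hg hh (by simp [h, hg₀]) ?_ ?_ hfin
  · simpa using hODE
  · simpa only [sub_zero] using mul_deriv_neg_comp_neg_eq hodd hODE

end BriotBouquet

section Soliton

variable {𝕜 : Type*} [NontriviallyNormedField 𝕜]

/-- The right-hand side `(ε + y²)(s - η y)` of the translating-soliton equation
`s g' = F(s, g)` for the slope `g = f'`, as a function of `p = (s, y)`. -/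
def solitonField (ε η : 𝕜) (p : 𝕜 × 𝕜) : 𝕜 :=
  (ε + p.2 ^ 2) * (p.1 - η * p.2)

theorem solitonField_odd (ε η : 𝕜) : (solitonField ε η).Odd := fun p ↦ by
  simp only [solitonField, Prod.fst_neg, Prod.snd_neg]
  ring

theorem hasStrictFDerivAt_solitonField_zero (ε η : 𝕜) :
    HasStrictFDerivAt (solitonField ε η) (ε • (.fst 𝕜 𝕜 𝕜 - η • .snd 𝕜 𝕜 𝕜)) 0 := by
  have hfst : HasStrictFDerivAt Prod.fst (.fst 𝕜 𝕜 𝕜) (0 : 𝕜 × 𝕜) := hasStrictFDerivAt_fst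
  have hsnd : HasStrictFDerivAt Prod.snd (.snd 𝕜 𝕜 𝕜) (0 : 𝕜 × 𝕜) := hasStrictFDerivAt_snd
  refine (((hsnd.pow 2).const_add ε).mul (hfst.sub (hsnd.const_mul η))).congr_fderiv ?_
  ext <;> simp

theorem stmt_12_general [CompleteSpace 𝕜] [CharZero 𝕜] (ε η : 𝕜)
    (hres : ∀ n : ℕ, 0 < n → Even n → -(ε * η) ≠ n)
    (f : 𝕜 → 𝕜) (ha : AnalyticAt 𝕜 f 0) (h0 : deriv f 0 = 0)
    (hODE : ∀ᶠ s in 𝓝 0,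
      s * deriv (deriv f) s = (ε + (deriv f s) ^ 2) * (s - η * deriv f s)) :
    ∀ᶠ s in 𝓝 0, f (-s) = f s :=
  eventually_even_of_eventually_odd_deriv ha <|
    eventually_odd_of_mul_deriv_eq (solitonField_odd ε η) (hasStrictFDerivAt_solitonField_zero ε η)
      (by simpa using hres) ha.deriv h0 hODE

end Soliton

theorem neg_mul_ne_natCast_of_sign {ε η : ℝ} (hε : ε = 1 ∨ ε = -1) (hη : η = 1 ∨ η = -1) {n : ℕ}
    (hpos : 0 < n) (heven : Even n) : -(ε * η) ≠ n := by
  have htwo : (2 : ℝ) ≤ n := by exact_mod_cast Nat.le_of_dvd hpos heven.two_dvd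
  rcases hε with rfl | rfl <;> rcases hη with rfl | rfl <;> linarith

/-- Analytic solutions of the singular boost-invariant translating-soliton ODE
with vanishing derivative at the origin are even near the origin. -/
theorem stmt_12 (ε η : ℝ) (hε : ε = 1 ∨ ε = -1) (hη : η = 1 ∨ η = -1)
    (f : ℝ → ℝ) (ha : AnalyticAt ℝ f 0) (h0 : deriv f 0 = 0)
    (hODE : ∀ᶠ s in 𝓝 (0 : ℝ),
      s * deriv (deriv f) s = (ε + (deriv f s) ^ 2) * (s - η * deriv f s)) :
    ∃ δ : ℝ, 0 < δ ∧ ∀ s ∈ Set.Ioo (-δ) δ, f (-s) = f s := by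
  have heven := stmt_12_general ε η (fun _ ↦ neg_mul_ne_natCast_of_sign hε hη) f ha h0 hODE
  simpa [Metric.eventually_nhds_iff_ball, Real.ball_eq_Ioo] using heven
end

section
/- Let n be a natural number, and let f₁, f₂ : ℝ → ℝ be of class C^{2n} such that for every odd k ≤ 2n, f₁^{(k)}(0) = f₂^{(k)}(0) = 0, and for every even k ≤ 2n, f₁^{(k)}(0) = (−1)^{k/2}·f₂^{(k)}(0). Define u : ℝ² → ℝ by u(x,y) = f₁(√(x²−y²)) when x² > y², u(x,y) = f₂(√(y²−x²)) when y² > x², and u(x,y) = f₁(0) when x² = y². Then u is of class C^n on ℝ². -/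
/-!
Both branches of `u` are functions of `t = x² - y²`: `f₁ √t` for `t ≥ 0` and `f₂ √(-t)` for `t < 0`.
Differentiating in `t` replaces the profiles by `f₁'(s) / (2s)` and `-f₂'(s) / (2s)`. As `f₁'` and
`f₂'` vanish at `0`, Hadamard's formula `f'(s) / s = ∫₀¹ f''(ts) dt` shows that these quotients are
only two orders less regular, and computes their Taylor coefficients at `0`: they are again a
matching pair, the sign `(-1)^j` absorbing the minus sign. Induction on `n` finishes the proof.
-/

open Set Filter Topology MeasureTheory

theorem hasDerivAt_intervalIntegral_of_continuous {𝕜 E : Type*} [RCLike 𝕜]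
    [NormedAddCommGroup E] [NormedSpace ℝ E] [NormedSpace 𝕜 E]
    {μ : Measure ℝ} [IsLocallyFiniteMeasure μ] {F F' : 𝕜 → ℝ → E}
    (hF : ∀ x, Continuous (F x)) (hF' : Continuous (Function.uncurry F'))
    (hFF' : ∀ x t, HasDerivAt (fun x => F x t) (F' x t) x) (a b : ℝ) (x : 𝕜) :
    HasDerivAt (fun x => ∫ t in a..b, F x t ∂μ) (∫ t in a..b, F' x t ∂μ) x := by
  obtain ⟨C, hC⟩ := ((isCompact_closedBall x 1).prod isCompact_uIcc).exists_bound_of_continuousOn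
    (hF'.continuousOn (s := Metric.closedBall x 1 ×ˢ uIcc a b))
  exact (intervalIntegral.hasDerivAt_integral_of_dominated_loc_of_deriv_le
    (bound := fun _ => C) (Metric.closedBall_mem_nhds x one_pos)
    (.of_forall fun y => (hF y).aestronglyMeasurable)
    ((hF x).intervalIntegrable a b)
    (hF'.uncurry_left x).aestronglyMeasurable
    (.of_forall fun t ht y hy => hC (y, t) ⟨hy, uIoc_subset_uIcc ht⟩)
    intervalIntegrable_const
    (.of_forall fun t _ y _ => hFF' y t)).2

/-- The function of `t` equal to `a √t` for `t ≥ 0` and to `b √(-t)` for `t < 0`. With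
`t = x² - y²` it is the soliton profile glued along the light cone. -/
noncomputable def sqrtGlue {X : Type*} (a b : ℝ → X) (t : ℝ) : X :=
  if 0 ≤ t then a (√t) else b (√(-t))

theorem sqrtGlue_of_nonneg {X : Type*} (a b : ℝ → X) {t : ℝ} (ht : 0 ≤ t) :
    sqrtGlue a b t = a (√t) :=
  if_pos ht

theorem sqrtGlue_of_neg {X : Type*} (a b : ℝ → X) {t : ℝ} (ht : t < 0) :
    sqrtGlue a b t = b (√(-t)) :=
  if_neg ht.not_ge

theorem continuous_sqrtGlue {X : Type*} [TopologicalSpace X] {a b : ℝ → X}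
    (ha : Continuous a) (hb : Continuous b) (hab : a 0 = b 0) : Continuous (sqrtGlue a b) :=
  Continuous.if_le (by fun_prop) (by fun_prop) continuous_const continuous_id
    (by rintro _ rfl; simpa using hab)

section

variable {E : Type*} [NormedAddCommGroup E] [NormedSpace ℝ E] {f a b : ℝ → E}

/-- The `j`-th moment of `f` along the segment from `c` to `x`, parametrized by `[0, 1]`. Moments
of all orders are needed because each differentiation in `x` produces a factor `t`. -/
noncomputable def segmentMoment (j : ℕ) (f : ℝ → E) (c x : ℝ) : E :=
  ∫ t in (0 : ℝ)..1, t ^ j • f (c + t * (x - c))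

theorem segmentMoment_self [CompleteSpace E] (j : ℕ) (f : ℝ → E) (c : ℝ) :
    segmentMoment j f c c = (j + 1 : ℝ)⁻¹ • f c := by
  simp [segmentMoment, intervalIntegral.integral_smul_const]

theorem continuous_segmentMoment (j : ℕ) (hf : Continuous f) (c : ℝ) :
    Continuous (segmentMoment j f c) := by
  unfold segmentMoment
  exact intervalIntegral.continuous_parametric_intervalIntegral_of_continuous' (by fun_prop) 0 1

theorem hasDerivAt_segmentMoment (j : ℕ) (hf : ContDiff ℝ 1 f) (c x : ℝ) :
    HasDerivAt (segmentMoment j f c) (segmentMoment (j + 1) (deriv f) c x) x := by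
  have := hf.continuous_deriv le_rfl
  refine hasDerivAt_intervalIntegral_of_continuous
    (F' := fun y t => t ^ (j + 1) • deriv f (c + t * (y - c)))
    (fun y => ?_) ?_ (fun y t => ?_) 0 1 x
  · have := hf.continuous
    fun_prop
  · fun_prop
  · have inner : HasDerivAt (fun y => c + t * (y - c)) t y := by
      simpa using (((hasDerivAt_id y).sub_const c).const_mul t).const_add c
    have outer := ((hf.differentiable one_ne_zero _).hasDerivAt.scomp y inner).const_smul (t ^ j)
    simpa only [smul_smul, ← pow_succ] using! outer

theorem deriv_segmentMoment (j : ℕ) (hf : ContDiff ℝ 1 f) (c : ℝ) :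
    deriv (segmentMoment j f c) = segmentMoment (j + 1) (deriv f) c :=
  funext fun x => (hasDerivAt_segmentMoment j hf c x).deriv

theorem contDiff_segmentMoment {m : ℕ} (j : ℕ) (hf : ContDiff ℝ m f) (c : ℝ) :
    ContDiff ℝ m (segmentMoment j f c) := by
  induction m generalizing j f with
  | zero => exact contDiff_zero.2 (continuous_segmentMoment j hf.continuous c)
  | succ m ih =>
    have hf₁ : ContDiff ℝ 1 f := hf.of_le (by exact_mod_cast Nat.le_add_left 1 m)
    push_cast at hf ⊢
    rw [contDiff_succ_iff_deriv, deriv_segmentMoment j hf₁]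
    exact ⟨fun x => (hasDerivAt_segmentMoment j hf₁ c x).differentiableAt, by simp,
      ih (j + 1) (contDiff_succ_iff_deriv.1 hf).2.2⟩

theorem iteratedDeriv_segmentMoment {k : ℕ} (j : ℕ) (hf : ContDiff ℝ k f) (c : ℝ) :
    iteratedDeriv k (segmentMoment j f c) = segmentMoment (j + k) (iteratedDeriv k f) c := by
  induction k generalizing j f with
  | zero => simp
  | succ k ih =>
    have hf₁ : ContDiff ℝ 1 f := hf.of_le (by exact_mod_cast Nat.le_add_left 1 k)
    push_cast at hf
    rw [iteratedDeriv_succ', deriv_segmentMoment j hf₁, ih _ (contDiff_succ_iff_deriv.1 hf).2.2,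
      iteratedDeriv_succ', Nat.add_right_comm, Nat.add_assoc]

/-- The derivative of `f` with respect to the square of its variable, `s ↦ f'(s) / (2s)`, with the
value `f''(0) / 2` at `s = 0`. This is its meaning when `f'(0) = 0`. -/
noncomputable def sqDeriv (f : ℝ → E) : ℝ → E :=
  (2⁻¹ : ℝ) • dslope (deriv f) 0

theorem hasDerivAt_comp_sqrt {t : ℝ} (ht : 0 < t) (hf : DifferentiableAt ℝ f (√t))
    (hf₀ : deriv f 0 = 0) : HasDerivAt (fun s => f (√s)) (sqDeriv f (√t)) t := by
  have hs : √t ≠ 0 := (Real.sqrt_pos.2 ht).ne'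
  refine (hf.hasDerivAt.scomp t (Real.hasDerivAt_sqrt ht.ne')).congr_deriv ?_
  simp [sqDeriv, dslope_of_ne _ hs, slope_def_module, hf₀, smul_smul, mul_comm]

theorem hasDerivAt_sqrtGlue_of_ne_zero (ha : Differentiable ℝ a) (hb : Differentiable ℝ b)
    (ha₀ : deriv a 0 = 0) (hb₀ : deriv b 0 = 0) {t : ℝ} (ht : t ≠ 0) :
    HasDerivAt (sqrtGlue a b) (sqrtGlue (sqDeriv a) (-sqDeriv b) t) t := by
  obtain ht | ht := ht.lt_or_gt
  · have branch : sqrtGlue a b =ᶠ[𝓝 t] fun s => b (√(-s)) :=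
      eventually_of_mem (Iio_mem_nhds ht) fun s hs => sqrtGlue_of_neg a b hs
    rw [sqrtGlue_of_neg _ _ ht]
    have := (hasDerivAt_comp_sqrt (neg_pos.2 ht) (hb _) hb₀).scomp t (hasDerivAt_neg t)
    exact (this.congr_deriv (neg_one_smul ℝ _)).congr_of_eventuallyEq branch
  · have branch : sqrtGlue a b =ᶠ[𝓝 t] fun s => a (√s) :=
      eventually_of_mem (Ioi_mem_nhds ht) fun s hs => sqrtGlue_of_nonneg a b (le_of_lt hs)
    rw [sqrtGlue_of_nonneg _ _ ht.le]
    exact (hasDerivAt_comp_sqrt ht (ha _) ha₀).congr_of_eventuallyEq branch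

/-- The hypotheses of the gluing lemma: `a` and `b` are `C^{2n}`, with Taylor polynomials of order
`2 * n` at `0` of the form `P (s ^ 2)` and `P (-s ^ 2)` for a common polynomial `P`. Odd and even
orders of differentiation are indexed by `2 * j + 1` and `2 * j`. -/
structure JetsMatch (n : ℕ) (a b : ℝ → E) : Prop where
  contDiff_left : ContDiff ℝ (2 * n : ℕ) a
  contDiff_right : ContDiff ℝ (2 * n : ℕ) b
  odd_left : ∀ j < n, iteratedDeriv (2 * j + 1) a 0 = 0
  odd_right : ∀ j < n, iteratedDeriv (2 * j + 1) b 0 = 0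
  even : ∀ j ≤ n, iteratedDeriv (2 * j) a 0 = (-1 : ℝ) ^ j • iteratedDeriv (2 * j) b 0

theorem JetsMatch.apply_zero_eq {n : ℕ} (h : JetsMatch n a b) : a 0 = b 0 := by
  simpa using h.even 0 n.zero_le

theorem JetsMatch.continuous_sqrtGlue {n : ℕ} (h : JetsMatch n a b) :
    Continuous (sqrtGlue a b) :=
  _root_.continuous_sqrtGlue h.contDiff_left.continuous h.contDiff_right.continuous h.apply_zero_eq

variable [CompleteSpace E]

theorem dslope_eq_segmentMoment (hf : ContDiff ℝ 1 f) (c : ℝ) :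
    dslope f c = segmentMoment 0 (deriv f) c := by
  ext x
  obtain rfl | hx := eq_or_ne x c
  · simp [segmentMoment_self]
  · have := hf.continuous_deriv le_rfl
    have ftc : (x - c) • segmentMoment 0 (deriv f) c x = f x - f c := by
      simpa [segmentMoment] using intervalIntegral.integral_unitInterval_deriv_eq_sub
        (f := f) (z₀ := c) (z₁ := x - c) (by fun_prop)
        (fun t _ => (hf.differentiable one_ne_zero _).hasDerivAt)
    rw [dslope_of_ne f hx, slope_def_module, ← ftc, inv_smul_smul₀ (sub_ne_zero.2 hx)]

theorem contDiff_dslope {m : ℕ} (hf : ContDiff ℝ (m + 1) f) (c : ℝ) :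
    ContDiff ℝ m (dslope f c) := by
  rw [dslope_eq_segmentMoment (hf.of_le le_add_self)]
  exact contDiff_segmentMoment 0 (contDiff_succ_iff_deriv.1 hf).2.2 c

theorem iteratedDeriv_dslope_same {k : ℕ} (hf : ContDiff ℝ (k + 1) f) (c : ℝ) :
    iteratedDeriv k (dslope f c) c = (k + 1 : ℝ)⁻¹ • iteratedDeriv (k + 1) f c := by
  rw [dslope_eq_segmentMoment (hf.of_le le_add_self),
    iteratedDeriv_segmentMoment 0 (contDiff_succ_iff_deriv.1 hf).2.2, segmentMoment_self,
    iteratedDeriv_succ', zero_add]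

theorem contDiff_sqDeriv {m : ℕ} (hf : ContDiff ℝ (m + 2 : ℕ) f) : ContDiff ℝ m (sqDeriv f) :=
  (contDiff_dslope (contDiff_succ_iff_deriv.1 (mod_cast hf)).2.2 0).const_smul _

theorem iteratedDeriv_sqDeriv_zero {k : ℕ} (hf : ContDiff ℝ (k + 2 : ℕ) f) :
    iteratedDeriv k (sqDeriv f) 0 = (2 * (k + 1) : ℝ)⁻¹ • iteratedDeriv (k + 2) f 0 := by
  have hf' : ContDiff ℝ (k + 1) (deriv f) := (contDiff_succ_iff_deriv.1 (mod_cast hf)).2.2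
  rw [sqDeriv, iteratedDeriv_const_smul_field, iteratedDeriv_dslope_same hf', smul_smul,
    ← mul_inv, ← iteratedDeriv_succ']

theorem JetsMatch.sqDeriv_neg_sqDeriv {n : ℕ} (h : JetsMatch (n + 1) a b) :
    JetsMatch n (sqDeriv a) (-sqDeriv b) where
  contDiff_left := contDiff_sqDeriv h.contDiff_left
  contDiff_right := (contDiff_sqDeriv h.contDiff_right).neg
  odd_left j hj := by
    have ha : iteratedDeriv (2 * j + 1 + 2) a 0 = 0 := h.odd_left (j + 1) (by omega)
    rw [iteratedDeriv_sqDeriv_zero (h.contDiff_left.of_le (mod_cast by omega)), ha, smul_zero]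
  odd_right j hj := by
    have hb : iteratedDeriv (2 * j + 1 + 2) b 0 = 0 := h.odd_right (j + 1) (by omega)
    rw [iteratedDeriv_neg, iteratedDeriv_sqDeriv_zero (h.contDiff_right.of_le (mod_cast by omega)),
      hb, smul_zero, neg_zero]
  even j hj := by
    have hab : iteratedDeriv (2 * j + 2) a 0 = (-1 : ℝ) ^ (j + 1) • iteratedDeriv (2 * j + 2) b 0 :=
      h.even (j + 1) (by omega)
    rw [iteratedDeriv_neg, iteratedDeriv_sqDeriv_zero (h.contDiff_left.of_le (mod_cast by omega)),
      iteratedDeriv_sqDeriv_zero (h.contDiff_right.of_le (mod_cast by omega)), hab]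
    module

theorem JetsMatch.hasDerivAt_sqrtGlue {n : ℕ} (h : JetsMatch (n + 1) a b) (t : ℝ) :
    HasDerivAt (sqrtGlue a b) (sqrtGlue (sqDeriv a) (-sqDeriv b) t) t := by
  have order_ne_zero : ((2 * (n + 1) : ℕ) : WithTop ℕ∞) ≠ 0 := by simp
  refine hasDerivAt_of_hasDerivAt_of_ne' (x := 0) (fun s hs => ?_)
    h.continuous_sqrtGlue.continuousAt h.sqDeriv_neg_sqDeriv.continuous_sqrtGlue.continuousAt t
  exact hasDerivAt_sqrtGlue_of_ne_zero (h.contDiff_left.differentiable order_ne_zero)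
    (h.contDiff_right.differentiable order_ne_zero) (by simpa using h.odd_left 0 n.succ_pos)
    (by simpa using h.odd_right 0 n.succ_pos) hs

theorem JetsMatch.contDiff_sqrtGlue {n : ℕ} (h : JetsMatch n a b) :
    ContDiff ℝ n (sqrtGlue a b) := by
  induction n generalizing a b with
  | zero => exact contDiff_zero.2 h.continuous_sqrtGlue
  | succ n ih =>
    push_cast
    rw [contDiff_succ_iff_deriv, funext fun t => (h.hasDerivAt_sqrtGlue t).deriv]
    exact ⟨fun t => (h.hasDerivAt_sqrtGlue t).differentiableAt, by simp, ih h.sqDeriv_neg_sqDeriv⟩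

theorem stmt_13_general {V : Type*} [NormedAddCommGroup V] [NormedSpace ℝ V] (n : ℕ)
    (f₁ f₂ : ℝ → E) (hf₁ : ContDiff ℝ (2 * n : ℕ) f₁) (hf₂ : ContDiff ℝ (2 * n : ℕ) f₂)
    (hodd : ∀ k : ℕ, k ≤ 2 * n → Odd k → iteratedDeriv k f₁ 0 = 0 ∧ iteratedDeriv k f₂ 0 = 0)
    (heven : ∀ k : ℕ, k ≤ 2 * n → Even k →
      iteratedDeriv k f₁ 0 = (-1 : ℝ) ^ (k / 2) • iteratedDeriv k f₂ 0)
    (q : V → ℝ) (hq : ContDiff ℝ n q) (u : V → E)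
    (hu₁ : ∀ p, 0 < q p → u p = f₁ (√(q p)))
    (hu₂ : ∀ p, q p < 0 → u p = f₂ (√(-q p)))
    (hu₃ : ∀ p, q p = 0 → u p = f₁ 0) :
    ContDiff ℝ n u := by
  have hf : JetsMatch n f₁ f₂ :=
    { contDiff_left := hf₁
      contDiff_right := hf₂
      odd_left := fun j hj => (hodd (2 * j + 1) (by omega) ⟨j, rfl⟩).1
      odd_right := fun j hj => (hodd (2 * j + 1) (by omega) ⟨j, rfl⟩).2
      even := fun j hj => by simpa using heven (2 * j) (by omega) (even_two_mul j) }
  have hu : u = sqrtGlue f₁ f₂ ∘ q := by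
    ext p
    obtain hp | hp | hp := lt_trichotomy (q p) 0
    · exact (hu₂ p hp).trans (sqrtGlue_of_neg f₁ f₂ hp).symm
    · simp [hu₃ p hp, hp, sqrtGlue]
    · exact (hu₁ p hp).trans (sqrtGlue_of_nonneg f₁ f₂ hp.le).symm
  exact hu ▸ hf.contDiff_sqrtGlue.comp hq

end

/-- The gluing lemma for boost-invariant translating solitons in Minkowski 3-space:
C^{2n} profiles with matching derivatives at 0 glue to a C^n function on the plane. -/
theorem stmt_13 (n : ℕ) (f₁ f₂ : ℝ → ℝ)
    (hf₁ : ContDiff ℝ (2 * n : ℕ) f₁) (hf₂ : ContDiff ℝ (2 * n : ℕ) f₂)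
    (hodd : ∀ k : ℕ, k ≤ 2 * n → Odd k →
      iteratedDeriv k f₁ 0 = 0 ∧ iteratedDeriv k f₂ 0 = 0)
    (heven : ∀ k : ℕ, k ≤ 2 * n → Even k →
      iteratedDeriv k f₁ 0 = (-1 : ℝ) ^ (k / 2) * iteratedDeriv k f₂ 0)
    (u : ℝ × ℝ → ℝ)
    (hu₁ : ∀ x y : ℝ, y ^ 2 < x ^ 2 → u (x, y) = f₁ (Real.sqrt (x ^ 2 - y ^ 2)))
    (hu₂ : ∀ x y : ℝ, x ^ 2 < y ^ 2 → u (x, y) = f₂ (Real.sqrt (y ^ 2 - x ^ 2)))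
    (hu₃ : ∀ x y : ℝ, x ^ 2 = y ^ 2 → u (x, y) = f₁ 0) :
    ContDiff ℝ (n : ℕ) u :=
  stmt_13_general n f₁ f₂ hf₁ hf₂ hodd heven (fun p => p.1 ^ 2 - p.2 ^ 2) (by fun_prop) u
    (fun _ hp => hu₁ _ _ (sub_pos.1 hp)) (fun _ hp => by simpa using hu₂ _ _ (sub_neg.1 hp))
    (fun _ hp => hu₃ _ _ (sub_eq_zero.1 hp))
end
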